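/- Let (R,m) be an ℕ-graded isolated non-F-rational singularity of dimension d over a field of characteristic p > 0, x_1,...,x_d a homogeneous sop, and φ : R → R̄ = R/x_dR the natural surjection. Then φ induces a well-defined map φ̄ : (x_1,...,x_d)^* → (x̄_1,...,x̄_{d-1})^*/(x̄_1,...,x̄_{d-1})^lim with ker φ̄ ⊆ (x_1,...,x_d)^lim. Consequently, for any n ∈ ℤ, if [(x_1,...,x_d)^*/(x_1,...,x_d)^lim]_n ≠ 0 then [(x̄_1,...,x̄_{d-1})^*/(x̄_1,...,x̄_{d-1})^lim]_n ≠ 0. -/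

import Mathlib

universe u

open IsLocalRing

noncomputable section

def offMinimalPrimes (R : Type*) [CommRing R] : Set R :=
  {c : R | ∀ P ∈ minimalPrimes R, c ∉ P}

def frobeniusPower {R : Type*} [CommRing R] (I : Ideal R) (q : ℕ) : Ideal R :=
  Ideal.span ((fun r => r ^ q) '' (I : Set R))

def tightClosure {R : Type*} [CommRing R] (p : ℕ) (I : Ideal R) : Set R :=
  {z : R | ∃ c ∈ offMinimalPrimes R, ∃ e₀ : ℕ, ∀ e ≥ e₀,
    c * z ^ p ^ e ∈ frobeniusPower I (p ^ e)}

def idealHeight {R : Type*} [CommRing R] (I : Ideal R) : ℕ∞ :=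
  ⨅ (P : PrimeSpectrum R) (_ : I ≤ P.asIdeal), Order.height P

/-- A parameter ideal: generated by as many elements as its height. -/
def IsParameterIdeal {R : Type*} [CommRing R] (I : Ideal R) : Prop :=
  ∃ (n : ℕ) (y : Fin n → R), I = Ideal.span (Set.range y) ∧ idealHeight I = (n : ℕ∞)

/-- `F`-rationality: every parameter ideal is tightly closed. -/
def IsFRational (p : ℕ) (S : Type*) [CommRing S] : Prop :=
  ∀ I : Ideal S, IsParameterIdeal I → tightClosure p I = (I : Set S)

/-- Isolated non-`F`-rational singularity: `R_P` is `F`-rational for every prime `P ≠ 𝔪`. -/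
def IsIsolatedNonFRational {R : Type*} [CommRing R] (p : ℕ) (𝔪 : Ideal R) : Prop :=
  ∀ P : PrimeSpectrum R, P.asIdeal ≠ 𝔪 → IsFRational p (Localization.AtPrime P.asIdeal)

/-- The ideal generated by the first `i` entries of `x`. -/
def firstIdeal {R : Type*} [CommRing R] {d : ℕ} (x : Fin d → R) (i : ℕ) : Ideal R :=
  Ideal.span (x '' {j : Fin d | (j : ℕ) < i})

/-- The limit closure `(x_1,…,x_i)^lim`. -/
def firstLimitClosure {R : Type*} [CommRing R] {d : ℕ} (x : Fin d → R) (i : ℕ) : Set R :=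
  {z : R | ∃ s ≥ 1,
    (∏ j ∈ Finset.univ.filter (fun j : Fin d => (j : ℕ) < i), x j) ^ (s - 1) * z ∈
      Ideal.span ((fun j => x j ^ s) '' {j : Fin d | (j : ℕ) < i})}

/-- The grading of `R` extended to `ℤ` (zero in negative degrees). -/
def gradeZ {K R : Type*} [Field K] [CommRing R] [Algebra K R]
    (𝒜 : ℕ → Submodule K R) (n : ℤ) : Submodule K R :=
  if 0 ≤ n then 𝒜 n.toNat else ⊥

/-- The degree-`m` part of the quotient `T/L` of two ideals, induced by the grading of `R`. -/
def quotientGradedPiece {K R : Type*} [Field K] [CommRing R] [Algebra K R]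
    (𝒜 : ℕ → Submodule K R) (T L : Ideal R) (m : ℤ) :
    AddSubgroup (T ⧸ Submodule.comap T.subtype L) :=
  AddSubgroup.map (Submodule.mkQ (Submodule.comap T.subtype L)).toAddMonoidHom
    (AddSubgroup.comap T.subtype.toAddMonoidHom (gradeZ 𝒜 m).toAddSubgroup)

end

/-- The limit closure of a full sequence `y`. -/
def limitClosure {S : Type*} [CommRing S] {i : ℕ} (y : Fin i → S) : Set S :=
  {z : S | ∃ s ≥ 1, (∏ j, y j) ^ (s - 1) * z ∈ Ideal.span (Set.range fun j => y j ^ s)}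

/-! For `z` in the tight closure of `I`, let `J` be the ideal of all `c` with `c z^q ∈ I^[q]` for
`q ≫ 0`. The image of `z` in `R/(a)` lies in the tight closure of the image of `I` as soon as `J`
is contained in no minimal prime `P` of `(a)`. The prime `P = 𝔪` needs no attention, since there
the image of `z` in `R/(a)` becomes nilpotent after localizing. Every other `P` has height at most
one by the principal ideal theorem. In height zero, `J ⊄ P` is the definition of tight closure.
In height one, `R_P` is a discrete valuation ring: it is `F`-rational, and if `𝔪_P` is not
principal, then an element `b ∉ (a)` with `𝔪_P b ⊆ (a)` satisfies `𝔪_P b ⊆ 𝔪_P a`, hence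
`c b^q ∈ (a^q)` for all `c ∈ 𝔪_P` and all `q`, so that `b ∈ (a)^* = (a)`, a contradiction.

To see that `J ⊄ P` when `R_P` is a discrete valuation ring, descend the data along a faithfully
flat map to a ring essentially of finite type over `𝔽_p`, where Frobenius is finite. A multiplier
`c ∈ J` that is nonzero in `R_P` lies outside `𝔪_P^[q]` for some `q = p^e`, so it is part of a
basis of `R_P` over the ring of its `q`-th powers, and a `p⁻ᵉ`-linear map takes it to a unit.
Clearing denominators gives a `p⁻ᵉ`-linear endomorphism of the ring itself that takes `c` out of
`P`, and such endomorphisms preserve `J`.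

For the limit closures, multiply a relation
`(x_1 ⋯ x_{d-1})^(s-1) r ∈ (x_1^s, …, x_{d-1}^s) + (x_d)` by `x_d^(s-1)`. -/

section FrobeniusPower

variable {R S : Type*} [CommRing R] [CommRing S]

lemma pow_mem_frobeniusPower {I : Ideal R} {r : R} (hr : r ∈ I) (q : ℕ) :
    r ^ q ∈ frobeniusPower I q :=
  Ideal.subset_span ⟨r, hr, rfl⟩

lemma frobeniusPower_le_pow (I : Ideal R) (q : ℕ) : frobeniusPower I q ≤ I ^ q :=
  Ideal.span_le.mpr <| Set.image_subset_iff.mpr fun _ hr ↦ Ideal.pow_mem_pow hr q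

lemma map_frobeniusPower_le (f : R →+* S) (I : Ideal R) (q : ℕ) :
    (frobeniusPower I q).map f ≤ frobeniusPower (I.map f) q := by
  rw [frobeniusPower, Ideal.map_span, Ideal.span_le]
  rintro _ ⟨_, ⟨r, hr, rfl⟩, rfl⟩
  simpa only [map_pow, SetLike.mem_coe] using pow_mem_frobeniusPower (Ideal.mem_map_of_mem f hr) q

lemma map_frobeniusPower (p e : ℕ) [ExpChar S p] (f : R →+* S) (I : Ideal R) :
    (frobeniusPower I (p ^ e)).map f = frobeniusPower (I.map f) (p ^ e) := by
  refine (map_frobeniusPower_le f I _).antisymm (Ideal.span_le.mpr ?_)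
  suffices I.map f ≤ ((frobeniusPower I (p ^ e)).map f).comap (iterateFrobenius S p e) by
    rintro _ ⟨s, hs, rfl⟩
    exact this hs
  refine Ideal.map_le_iff_le_comap.mpr fun r hr ↦ ?_
  simp only [Ideal.mem_comap, iterateFrobenius_def, ← map_pow]
  exact Ideal.mem_map_of_mem f (pow_mem_frobeniusPower hr _)

end FrobeniusPower

section OffMinimalPrimes

variable {R : Type*} [CommRing R]

lemma exists_mem_offMinimalPrimes_iff [IsNoetherianRing R] {I : Ideal R} :
    (∃ c ∈ I, c ∈ offMinimalPrimes R) ↔ ∀ P ∈ minimalPrimes R, ¬ I ≤ P := by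
  refine ⟨fun ⟨c, hcI, hc⟩ P hP hIP ↦ hc P hP (hIP hcI), ?_⟩
  contrapose!
  intro h
  have hcover : (I : Set R) ⊆ ⋃ P ∈ minimalPrimes R, (id P : Ideal R) := fun c hc ↦ by
    simpa [offMinimalPrimes] using h c hc
  exact (Ideal.subset_union_prime_finite (minimalPrimes.finite_of_isNoetherianRing R) ⊥ ⊥
    fun P hP _ _ ↦ hP.1.1).mp hcover

lemma algebraMap_atPrime_ne_zero_of_mem_offMinimalPrimes {c : R} (hc : c ∈ offMinimalPrimes R)
    (P : Ideal R) [P.IsPrime] : algebraMap R (Localization.AtPrime P) c ≠ 0 := by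
  intro h
  obtain ⟨s, hs⟩ := (IsLocalization.map_eq_zero_iff P.primeCompl _ c).mp h
  obtain ⟨Q, hQ, hQP⟩ := Ideal.exists_minimalPrimes_le (bot_le : (⊥ : Ideal R) ≤ P)
  have hscQ : (s : R) * c ∈ Q := by rw [hs]; exact Q.zero_mem
  exact hc Q hQ ((hQ.1.1.mem_or_mem hscQ).resolve_left fun h ↦ s.2 (hQP h))

end OffMinimalPrimes

section TightMultiplier

variable {R S : Type*} [CommRing R] [CommRing S]

/-- The ideal of multipliers `c` with `c z^q ∈ I^[q]` for all large powers `q` of `p`; the element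
`z` lies in the tight closure of `I` when this ideal is not contained in the union of the minimal
primes. -/
def tightMultiplier (p : ℕ) (I : Ideal R) (z : R) : Ideal R where
  carrier := {c | ∀ᶠ e in Filter.atTop, c * z ^ p ^ e ∈ frobeniusPower I (p ^ e)}
  zero_mem' := by simp
  add_mem' ha hb := by
    filter_upwards [ha, hb] with e ha hb
    rw [add_mul]
    exact Ideal.add_mem _ ha hb
  smul_mem' r c hc := by
    filter_upwards [hc] with e hc
    rw [smul_eq_mul, mul_assoc]
    exact Ideal.mul_mem_left _ r hc

variable {p : ℕ} {I : Ideal R} {z c : R}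

lemma mem_tightMultiplier_iff : c ∈ tightMultiplier p I z ↔
    ∀ᶠ e in Filter.atTop, c * z ^ p ^ e ∈ frobeniusPower I (p ^ e) :=
  Iff.rfl

lemma mem_tightClosure_iff :
    z ∈ tightClosure p I ↔ ∃ c ∈ tightMultiplier p I z, c ∈ offMinimalPrimes R := by
  simp only [tightClosure, Set.mem_ofPred_eq, mem_tightMultiplier_iff, Filter.eventually_atTop,
    and_comm]

lemma mem_tightClosure_iff_forall_minimalPrimes [IsNoetherianRing R] :
    z ∈ tightClosure p I ↔ ∀ P ∈ minimalPrimes R, ¬ tightMultiplier p I z ≤ P :=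
  mem_tightClosure_iff.trans exists_mem_offMinimalPrimes_iff

lemma map_tightMultiplier_le (f : R →+* S) :
    (tightMultiplier p I z).map f ≤ tightMultiplier p (I.map f) (f z) := by
  refine Ideal.map_le_iff_le_comap.mpr fun c hc ↦ ?_
  simp only [Ideal.mem_comap, mem_tightMultiplier_iff] at hc ⊢
  filter_upwards [hc] with e hc
  simpa only [map_mul, map_pow] using map_frobeniusPower_le f I _ (Ideal.mem_map_of_mem f hc)

lemma comap_tightMultiplier_map [Algebra R S] [Module.FaithfullyFlat R S] [ExpChar S p] :
    (tightMultiplier p (I.map (algebraMap R S)) (algebraMap R S z)).comap (algebraMap R S) =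
      tightMultiplier p I z := by
  ext c
  simp only [Ideal.mem_comap, mem_tightMultiplier_iff, ← map_frobeniusPower, ← map_pow, ← map_mul]
  simp only [← Ideal.mem_comap, Ideal.comap_map_eq_self_of_faithfullyFlat]

lemma tightClosure_subset_of_isPrime [IsNoetherianRing R] (hp : 1 < p) {P : Ideal R} [P.IsPrime]
    (hIP : I ≤ P) : tightClosure p I ⊆ P := by
  intro z hz
  by_contra hzP
  obtain ⟨c, hcz, hc⟩ := mem_tightClosure_iff.mp hz
  let A := Localization.AtPrime P
  refine algebraMap_atPrime_ne_zero_of_mem_offMinimalPrimes hc P ?_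
  rw [← Ideal.mem_bot,
    ← Ideal.iInf_pow_eq_bot_of_isLocalRing (maximalIdeal A) (maximalIdeal.isMaximal A).ne_top,
    Submodule.mem_iInf]
  intro k
  obtain ⟨e, hcze, hke⟩ := (hcz.and (Filter.eventually_ge_atTop k)).exists
  have hunit : IsUnit (algebraMap R A z ^ p ^ e) :=
    (IsLocalization.map_units A (⟨z, hzP⟩ : P.primeCompl)).pow _
  have hmem : algebraMap R A c * algebraMap R A z ^ p ^ e ∈ maximalIdeal A ^ p ^ e := by
    rw [← map_pow, ← map_mul, ← Localization.AtPrime.map_eq_maximalIdeal, ← Ideal.map_pow]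
    exact Ideal.mem_map_of_mem _ (Ideal.pow_right_mono hIP _ (frobeniusPower_le_pow I _ hcze))
  exact Ideal.pow_le_pow_right (hke.trans (Nat.lt_pow_self hp).le)
    ((Ideal.mul_unit_mem_iff_mem _ hunit).mp hmem)

lemma not_tightMultiplier_le_of_mem_minimalPrimes (hp : 1 < p) {P : Ideal R}
    (hP : P ∈ minimalPrimes R) (hz : z ∈ P) : ¬ tightMultiplier p I z ≤ P := by
  have : P.IsPrime := hP.1.1
  obtain ⟨k, hk⟩ : algebraMap R (Localization.AtPrime P) z ∈
      (Ideal.map (algebraMap R (Localization.AtPrime P)) ⊥).radical := by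
    rw [IsLocalization.AtPrime.radical_map_of_mem_minimalPrimes _ P ⊥ hP]
    exact Ideal.mem_map_of_mem _ hz
  rw [Ideal.map_bot, Ideal.mem_bot, ← map_pow] at hk
  obtain ⟨s, hs⟩ := (IsLocalization.map_eq_zero_iff P.primeCompl _ (z ^ k)).mp hk
  refine fun hle ↦ s.2 (hle ?_)
  filter_upwards [Filter.eventually_ge_atTop k] with e hke
  rw [← Nat.sub_add_cancel (hke.trans (Nat.lt_pow_self hp).le), pow_add, mul_left_comm, hs,
    mul_zero]
  exact Ideal.zero_mem _

end TightMultiplier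

section FRational

variable {A : Type*} [CommRing A] {p : ℕ}

lemma offMinimalPrimes_subset_nonZeroDivisors [IsReduced A] {a : A}
    (ha : a ∈ offMinimalPrimes A) : a ∈ nonZeroDivisors A := by
  refine mem_nonZeroDivisors_iff_right.mpr fun b hab ↦ ?_
  have hb : b ∈ sInf (minimalPrimes A) := Submodule.mem_sInf.mpr fun Q hQ ↦
    (hQ.1.1.mem_or_mem (hab ▸ Q.zero_mem)).resolve_right (ha Q hQ)
  rw [minimalPrimes, Ideal.sInf_minimalPrimes] at hb
  exact IsReduced.eq_zero b hb

lemma idealHeight_eq_height (I : Ideal A) : idealHeight I = I.height := by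
  refine le_antisymm ?_ (le_iInf₂ fun P hP ↦ ?_)
  · rw [Ideal.height_eq_inf_minimalPrimes]
    refine le_iInf₂ fun P hP ↦ (iInf₂_le ⟨P, hP.isPrime⟩ hP.1.2).trans ?_
    rw [← PrimeSpectrum.height_eq_orderHeight]
  · rw [← PrimeSpectrum.height_eq_orderHeight]
    exact Ideal.height_mono hP

lemma isParameterIdeal_bot [Nontrivial A] : IsParameterIdeal (⊥ : Ideal A) :=
  ⟨0, Fin.elim0, by simp, by simp [idealHeight_eq_height]⟩

lemma isParameterIdeal_span_singleton [IsNoetherianRing A] {a : A} (ha : a ∈ nonZeroDivisors A)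
    (ha' : ¬ IsUnit a) : IsParameterIdeal (Ideal.span {a}) :=
  ⟨1, fun _ ↦ a, by simp, by
    simpa [idealHeight_eq_height] using
      Ideal.height_span_singleton_eq_one_of_mem_nonZeroDivisors ha ha'⟩

lemma mem_tightClosure_of_isNilpotent (hp : 1 < p) (I : Ideal A) {z : A} (hz : IsNilpotent z) :
    z ∈ tightClosure p I := by
  obtain ⟨k, hk⟩ := hz
  refine ⟨1, fun P hP ↦ (Ideal.ne_top_iff_one P).mp hP.isPrime.ne_top, k, fun e hke ↦ ?_⟩
  rw [pow_eq_zero_of_le (hke.trans (Nat.lt_pow_self hp).le) hk, mul_zero]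
  exact Ideal.zero_mem _

lemma IsFRational.isReduced (hp : 1 < p) (hA : IsFRational p A) : IsReduced A := by
  nontriviality A
  refine ⟨fun z hz ↦ ?_⟩
  have := mem_tightClosure_of_isNilpotent hp ⊥ hz
  rwa [hA ⊥ isParameterIdeal_bot, SetLike.mem_coe, Ideal.mem_bot] at this

lemma exists_mul_pow_eq_mul_pow {N : Ideal A} {a b : A}
    (h : ∀ y ∈ N, ∃ w ∈ N, y * b = w * a) (q : ℕ) {y : A} (hy : y ∈ N) :
    ∃ w ∈ N, y * b ^ q = w * a ^ q := by
  induction q with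
  | zero => exact ⟨y, hy, by simp only [pow_zero]⟩
  | succ q ih =>
    obtain ⟨v, hv, hyv⟩ := ih
    obtain ⟨w, hw, hvw⟩ := h v hv
    exact ⟨w, hw, by rw [pow_succ, ← mul_assoc, hyv, mul_right_comm, hvw, pow_succ']; ring⟩

lemma mem_tightClosure_span_singleton {N : Ideal A} {a b c : A}
    (h : ∀ y ∈ N, ∃ w ∈ N, y * b = w * a) (hcN : c ∈ N) (hc : c ∈ offMinimalPrimes A) :
    b ∈ tightClosure p (Ideal.span {a}) := by
  refine ⟨c, hc, 0, fun e _ ↦ ?_⟩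
  obtain ⟨w, -, hw⟩ := exists_mul_pow_eq_mul_pow h (p ^ e) hcN
  rw [hw]
  exact Ideal.mul_mem_left _ w (pow_mem_frobeniusPower (Ideal.mem_span_singleton_self a) _)

lemma exists_forall_mem_iff_mul_mem_span_singleton [IsNoetherianRing A] {P : Ideal A} {a : A}
    (hP : P ∈ (Ideal.span {a}).minimalPrimes) :
    ∃ b, ∀ y, y ∈ P ↔ y * b ∈ Ideal.span {a} := by
  have hass : P ∈ associatedPrimes A (A ⧸ Ideal.span {a}) := by
    apply Module.associatedPrimes.minimalPrimes_annihilator_subset_associatedPrimes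
    rwa [Ideal.annihilator_quotient]
  obtain ⟨b, hb⟩ := (isAssociatedPrime_iff.mp hass).2
  obtain ⟨b, rfl⟩ := Ideal.Quotient.mk_surjective b
  refine ⟨b, fun y ↦ ?_⟩
  rw [hb, Submodule.mem_colon_singleton, ← Ideal.Quotient.eq_zero_iff_mem, map_mul]
  rfl

lemma maximalIdeal_eq_span_singleton_of_mul_eq_mul_isUnit [IsLocalRing A] {a b t u : A}
    (ha : a ∈ nonZeroDivisors A) (hb : ∀ y ∈ maximalIdeal A, y * b ∈ Ideal.span {a})
    (ht : t ∈ maximalIdeal A) (hu : IsUnit u) (htb : t * b = u * a) :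
    maximalIdeal A = Ideal.span {t} := by
  refine le_antisymm (fun y hy ↦ ?_) ((Ideal.span_singleton_le_iff_mem _).mpr ht)
  obtain ⟨w, hw⟩ := Ideal.mem_span_singleton'.mp (hb y hy)
  have huy : u * y = w * t := (mul_cancel_right_mem_nonZeroDivisors ha).mp <|
    calc u * y * a = y * (t * b) := by rw [htb]; ring
      _ = w * t * a := by rw [mul_left_comm, ← hw]; ring
  exact (Ideal.unit_mul_mem_iff_mem _ hu).mp (Ideal.mem_span_singleton'.mpr ⟨w, huy.symm⟩)

lemma IsFRational.exists_maximalIdeal_eq_span_singleton [IsNoetherianRing A] [IsLocalRing A]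
    (hp : 1 < p) (hA : IsFRational p A) (hht : (maximalIdeal A).height = 1) :
    ∃ t, maximalIdeal A = Ideal.span {t} := by
  have := hA.isReduced hp
  obtain ⟨a, ha𝔪, ha⟩ : ∃ a ∈ maximalIdeal A, a ∈ offMinimalPrimes A := by
    refine exists_mem_offMinimalPrimes_iff.mpr fun P hP hle ↦ ?_
    have := hP.isPrime
    have := Ideal.height_mono hle
    rw [hht, Ideal.height_eq_zero_iff.mpr hP] at this
    exact one_ne_zero (le_zero_iff.mp this)
  have ha0 := offMinimalPrimes_subset_nonZeroDivisors ha
  have ha' : ¬ IsUnit a := (mem_maximalIdeal a).mp ha𝔪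
  have hmin : maximalIdeal A ∈ (Ideal.span {a}).minimalPrimes :=
    Ideal.mem_minimalPrimes_of_height_le ((Ideal.span_singleton_le_iff_mem _).mpr ha𝔪)
      (hht.trans (Ideal.height_span_singleton_eq_one_of_mem_nonZeroDivisors ha0 ha').symm).le
  obtain ⟨b, hb⟩ := exists_forall_mem_iff_mul_mem_span_singleton hmin
  have hba : b ∉ Ideal.span {a} := fun h ↦
    (Ideal.ne_top_iff_one _).mp hmin.isPrime.ne_top ((hb 1).mpr (by rwa [one_mul]))
  suffices ∃ t ∈ maximalIdeal A, ∃ u, IsUnit u ∧ t * b = u * a by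
    obtain ⟨t, ht, u, hu, htb⟩ := this
    exact ⟨t, maximalIdeal_eq_span_singleton_of_mul_eq_mul_isUnit ha0 (fun y ↦ (hb y).mp)
      ht hu htb⟩
  by_contra! hcon
  have hb𝔪 : ∀ y ∈ maximalIdeal A, ∃ w ∈ maximalIdeal A, y * b = w * a := fun y hy ↦ by
    obtain ⟨w, hw⟩ := Ideal.mem_span_singleton'.mp ((hb y).mp hy)
    exact ⟨w, (mem_maximalIdeal w).mpr fun hwu ↦ hcon y hy w hwu hw.symm, hw.symm⟩
  have hmem : b ∈ tightClosure p (Ideal.span {a}) := mem_tightClosure_span_singleton hb𝔪 ha𝔪 ha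
  rw [hA _ (isParameterIdeal_span_singleton ha0 ha')] at hmem
  exact hba hmem

lemma isDomain_of_maximalIdeal_eq_span_singleton [IsNoetherianRing A] [IsLocalRing A] {t : A}
    (ht : maximalIdeal A = Ideal.span {t}) (hmin : maximalIdeal A ∉ minimalPrimes A) :
    IsDomain A := by
  obtain ⟨Q, hQ, -⟩ := Ideal.exists_minimalPrimes_le (bot_le : (⊥ : Ideal A) ≤ maximalIdeal A)
  have hQprime : Q.IsPrime := hQ.isPrime
  have hQ𝔪 : Q ≤ maximalIdeal A := le_maximalIdeal hQprime.ne_top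
  have htQ : t ∉ Q := fun htQ ↦ hmin <| by
    rwa [hQ𝔪.antisymm' (ht ▸ (Ideal.span_singleton_le_iff_mem _).mpr htQ)]
  have hQbot : Q = ⊥ := by
    refine Submodule.eq_bot_of_le_smul_of_le_jacobson_bot (maximalIdeal A) Q
      (IsNoetherian.noetherian Q) (fun y hy ↦ ?_) (jacobson_eq_maximalIdeal ⊥ bot_ne_top).ge
    obtain ⟨w, rfl⟩ := Ideal.mem_span_singleton.mp (ht ▸ hQ𝔪 hy)
    exact Submodule.smul_mem_smul (ht ▸ Ideal.mem_span_singleton_self t)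
      ((hQprime.mem_or_mem hy).resolve_left htQ)
  subst hQbot
  exact IsDomain.of_bot_isPrime A

lemma isPrincipalIdealRing_of_maximalIdeal_eq_span_singleton [IsNoetherianRing A] [IsLocalRing A]
    [IsDomain A] {t : A} (ht : maximalIdeal A = Ideal.span {t}) : IsPrincipalIdealRing A :=
  ((tfae_of_isNoetherianRing_of_isLocalRing_of_isDomain A).out 0 4).mpr
    (⟨t, ht⟩ : (maximalIdeal A).IsPrincipal)

end FRational

section Frobenius

lemma finite_of_essFiniteType_of_isIntegral {R S : Type*} [CommRing R] [CommRing S] {f : R →+* S}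
    (hf : f.EssFiniteType) (hf' : f.IsIntegral) : f.Finite := by
  algebraize [f]
  obtain ⟨σ, hσ⟩ := (Algebra.essFiniteType_iff R S).mp ‹Algebra.EssFiniteType R S›
  let R' := Algebra.adjoin R (σ : Set S)
  have : Algebra.IsIntegral R' S := Algebra.IsIntegral.tower_top R
  have hR' : R' = ⊤ := by
    refine Algebra.eq_top_iff.mpr fun s ↦ ?_
    obtain ⟨t, ht, htu, hst⟩ := hσ s
    obtain ⟨u, hu⟩ := isUnit_of_map_unit (algebraMap R' S) ⟨t, ht⟩ htu
    have hut : t * (u⁻¹ : R'ˣ) = 1 := congrArg Subtype.val (hu ▸ u.mul_inv)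
    rw [← mul_one s, ← hut, ← mul_assoc]
    exact R'.mul_mem hst (u⁻¹ : R'ˣ).1.2
  have : Algebra.FiniteType R S := ⟨σ, hR'⟩
  exact Algebra.IsIntegral.finite

lemma isIntegral_iterateFrobenius (B : Type*) [CommRing B] (p e : ℕ) [Fact p.Prime] [CharP B p] :
    (iterateFrobenius B p e).IsIntegral := fun x ↦
  ⟨Polynomial.X ^ p ^ e - Polynomial.C x,
    Polynomial.monic_X_pow_sub_C x (pow_ne_zero e (Fact.out : p.Prime).ne_zero),
    by simp [iterateFrobenius_def]⟩

lemma finite_iterateFrobenius (B : Type*) [CommRing B] (p e : ℕ) [Fact p.Prime]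
    [Algebra (ZMod p) B] [Algebra.EssFiniteType (ZMod p) B] [CharP B p] :
    (iterateFrobenius B p e).Finite := by
  have hess : (iterateFrobenius B p e).EssFiniteType := by
    refine RingHom.EssFiniteType.of_comp (algebraMap (ZMod p) B) ?_
    rw [Subsingleton.elim ((iterateFrobenius B p e).comp _) (algebraMap (ZMod p) B)]
    exact RingHom.essFiniteType_algebraMap.mpr inferInstance
  exact finite_of_essFiniteType_of_isIntegral hess (isIntegral_iterateFrobenius B p e)

end Frobenius

section Cartier

variable {A B C M : Type*} [CommRing A] [CommRing B] [CommRing C] [AddCommGroup M]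

/-- Linearity of an additive map out of `C` for the `B`-module structure that `f : B →+* C` induces
on `C`. It is stated for a map `f` rather than an algebra so that it applies to the iterated
Frobenius endomorphisms of `B`, for which it is `p⁻ᵉ`-linearity. -/
def IsLinearAlong (f : B →+* C) [Module B M] (φ : C →+ M) : Prop :=
  ∀ b x, φ (f b * x) = b • φ x

lemma IsLinearAlong.apply_mem_of_mem_map {f : B →+* C} {φ : C →+ B} (hφ : IsLinearAlong f φ)
    {J : Ideal B} {y : C} (hy : y ∈ J.map f) : φ y ∈ J := by
  suffices ∀ c, φ (c * y) ∈ J by simpa only [one_mul] using this 1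
  induction hy using Submodule.span_induction with
  | mem y hy =>
    obtain ⟨b, hb, rfl⟩ := hy
    intro c
    rw [mul_comm, hφ]
    exact J.mul_mem_right (φ c) hb
  | zero => simp only [mul_zero, map_zero, zero_mem, implies_true]
  | add y₁ y₂ _ _ h₁ h₂ =>
    intro c
    rw [mul_add, map_add]
    exact J.add_mem (h₁ c) (h₂ c)
  | smul a y _ h =>
    intro c
    rw [smul_eq_mul, ← mul_assoc]
    exact h (c * a)

lemma IsLinearAlong.mem_tightMultiplier {p e : ℕ} [ExpChar B p] {θ : B →+ B}
    (hθ : IsLinearAlong (iterateFrobenius B p e) θ) {I : Ideal B} {z c : B}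
    (hc : c ∈ tightMultiplier p I z) : θ c ∈ tightMultiplier p I z := by
  rw [mem_tightMultiplier_iff] at hc ⊢
  filter_upwards [(Filter.tendsto_add_atTop_nat e).eventually hc] with k hk
  have hpow (r : B) : r ^ p ^ (k + e) = iterateFrobenius B p e (r ^ p ^ k) := by
    rw [iterateFrobenius_def, ← pow_mul, ← pow_add]
  have hle : frobeniusPower I (p ^ (k + e)) ≤
      (frobeniusPower I (p ^ k)).map (iterateFrobenius B p e) := by
    refine Ideal.span_le.mpr ?_
    rintro _ ⟨r, hr, rfl⟩
    simpa only [hpow, SetLike.mem_coe] using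
      Ideal.mem_map_of_mem _ (pow_mem_frobeniusPower hr (p ^ k))
  have hθk : θ (c * z ^ p ^ (k + e)) = θ c * z ^ p ^ k := by
    rw [hpow, mul_comm, hθ, smul_eq_mul, mul_comm]
  exact hθk ▸ hθ.apply_mem_of_mem_map (hle hk)

lemma exists_linearMap_isUnit [IsLocalRing A] [Module A M] [Module.Free A M] [Module.Finite A M]
    {m : M} (hm : m ∉ maximalIdeal A • (⊤ : Submodule A M)) : ∃ φ : M →ₗ[A] A, IsUnit (φ m) := by
  let b := Module.Free.chooseBasis A M
  by_contra! h
  refine hm ?_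
  rw [← b.sum_repr m]
  exact Submodule.sum_mem _ fun i _ ↦
    Submodule.smul_mem_smul ((mem_maximalIdeal _).mpr (h (b.coord i))) Submodule.mem_top

lemma exists_isLinearAlong_isUnit [IsLocalRing A] [IsDomain A] [IsPrincipalIdealRing A]
    [IsDomain C] {f : A →+* C} (hf : f.Finite) (hinj : Function.Injective f) {c : C}
    (hc : c ∉ (maximalIdeal A).map f) : ∃ φ : C →+ A, IsLinearAlong f φ ∧ IsUnit (φ c) := by
  algebraize [f]
  have : FaithfulSMul A C := (faithfulSMul_iff_algebraMap_injective A C).mpr hinj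
  have : Module.Free A C := inferInstance
  obtain ⟨φ, hφ⟩ := exists_linearMap_isUnit (A := A) (m := c) (by
    rwa [Ideal.smul_top_eq_map, Submodule.restrictScalars_mem])
  exact ⟨φ.toAddMonoidHom, φ.map_smul, hφ⟩

lemma IsLinearAlong.exists_lift [IsNoetherianRing B] [Algebra B A] (S : Submonoid B)
    [IsLocalization S A] {f : B →+* C} (hf : f.Finite) {g : C →+ A} (hg : IsLinearAlong f g) :
    ∃ θ : C →+ B, IsLinearAlong f θ ∧ ∃ s ∈ S, ∀ x, algebraMap B A (θ x) = s • g x := by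
  algebraize [f]
  have : Module.FinitePresentation B C := Module.finitePresentation_of_finite B C
  let g' : C →ₗ[B] A := { g with map_smul' := hg }
  obtain ⟨θ, s, hθ⟩ := Module.FinitePresentation.exists_lift_of_isLocalizedModule S
    (Algebra.linearMap B A) g'
  exact ⟨θ.toAddMonoidHom, θ.map_smul, s, s.2, fun x ↦ congrArg (fun F ↦ F x) hθ⟩

lemma exists_notMem_map_iterateFrobenius [IsNoetherianRing A] [IsLocalRing A] {p : ℕ} (hp : 1 < p)
    [ExpChar A p] {c : A} (hc : c ≠ 0) :
    ∃ e, c ∉ (maximalIdeal A).map (iterateFrobenius A p e) := by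
  by_contra! h
  refine hc ?_
  rw [← Ideal.mem_bot,
    ← Ideal.iInf_pow_eq_bot_of_isLocalRing (maximalIdeal A) (maximalIdeal.isMaximal A).ne_top,
    Submodule.mem_iInf]
  intro e
  refine Ideal.pow_le_pow_right (Nat.lt_pow_self hp).le (Ideal.map_le_iff_le_comap.mpr ?_ (h e))
  exact fun a ha ↦ Ideal.pow_mem_pow ha (p ^ e)

lemma not_tightMultiplier_le_of_essFiniteType {p : ℕ} [Fact p.Prime] [Algebra (ZMod p) B]
    [Algebra.EssFiniteType (ZMod p) B] [CharP B p] {Q : Ideal B} [Q.IsPrime]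
    [IsDomain (Localization.AtPrime Q)] [IsPrincipalIdealRing (Localization.AtPrime Q)]
    {I : Ideal B} {z c : B} (hc : c ∈ tightMultiplier p I z)
    (hcQ : algebraMap B (Localization.AtPrime Q) c ≠ 0) : ¬ tightMultiplier p I z ≤ Q := by
  have : IsNoetherianRing B := Algebra.EssFiniteType.isNoetherianRing (ZMod p) B
  let A := Localization.AtPrime Q
  have : CharP A p := charP_of_injective_algebraMap (algebraMap (ZMod p) A).injective p
  obtain ⟨e, he⟩ := exists_notMem_map_iterateFrobenius (Fact.out : p.Prime).one_lt hcQ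
  obtain ⟨φ, hφ, hφc⟩ := exists_isLinearAlong_isUnit (finite_iterateFrobenius A p e)
    (iterateFrobenius_inj A p e) he
  let g : B →+ A := φ.comp (algebraMap B A).toAddMonoidHom
  have hg : IsLinearAlong (iterateFrobenius B p e) g := fun b x ↦ by
    simpa [g, iterateFrobenius_def, Algebra.smul_def] using hφ (algebraMap B A b) (algebraMap B A x)
  obtain ⟨θ, hθ, s, hs, hθg⟩ := hg.exists_lift Q.primeCompl (finite_iterateFrobenius B p e)
  refine fun hle ↦ (IsLocalization.AtPrime.to_map_mem_maximal_iff A Q (θ c)).mpr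
    (hle (hθ.mem_tightMultiplier hc)) ?_
  rw [hθg, Algebra.smul_def]
  exact (IsLocalization.map_units A (⟨s, hs⟩ : Q.primeCompl)).mul hφc

end Cartier

section Descent

lemma exists_field_essFiniteType {K : Type u} [Field K] (p : ℕ) [Fact p.Prime] [CharP K p]
    {S : Set K} (hS : S.Finite) :
    ∃ (k : Type u) (_ : Field k) (_ : Algebra (ZMod p) k) (_ : Algebra k K),
      Algebra.EssFiniteType (ZMod p) k ∧ S ⊆ Set.range (algebraMap k K) := by
  let : Algebra (ZMod p) K := ZMod.algebra K p
  let k := IntermediateField.adjoin (ZMod p) S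
  refine ⟨k, inferInstance, inferInstance, inferInstance, ?_, fun s hs ↦
    ⟨⟨s, IntermediateField.subset_adjoin _ _ hs⟩, rfl⟩⟩
  exact IntermediateField.essFiniteType_iff.mpr ⟨hS.toFinset, by rw [hS.coe_toFinset]⟩

open TensorProduct in
lemma exists_essFiniteType_faithfullyFlat (K : Type u) {R : Type*} [Field K] [CommRing R]
    [Algebra K R] [Algebra.FiniteType K R] (p : ℕ) [Fact p.Prime] [CharP K p] {T : Set R}
    (hT : T.Finite) :
    ∃ (B : Type u) (_ : CommRing B) (_ : Algebra (ZMod p) B) (_ : Algebra B R),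
      Algebra.EssFiniteType (ZMod p) B ∧ Module.FaithfullyFlat B R ∧
        T ⊆ Set.range (algebraMap B R) := by
  have : Algebra.FinitePresentation K R := Algebra.FinitePresentation.of_finiteType.mp inferInstance
  let P := Algebra.Presentation.ofFinitePresentation K R
  -- A finite presentation of `R` is defined over the subfield `k` of `K` generated by its
  -- coefficients, and `R` is obtained from this model by the free base change along `k → K`.
  obtain ⟨k, _, _, _, _, hk⟩ := exists_field_essFiniteType p
    (P.finite_coeffs.union (hT.biUnion fun t _ ↦ (P.σ t).coeffs.finite_toSet))
  let : Algebra k R := .compHom R (algebraMap k K)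
  have : IsScalarTower k K R := .of_algebraMap_eq' rfl
  have : P.HasCoeffs k := ⟨Set.subset_union_left.trans hk⟩
  let B := P.ModelOfHasCoeffs k
  let e : K ⊗[k] B ≃ₐ[K] R := P.tensorModelOfHasCoeffsEquiv k
  let : Algebra B R := (e.toRingHom.comp
    (Algebra.TensorProduct.includeRight : B →ₐ[k] K ⊗[k] B).toRingHom).toAlgebra
  let eB : B ⊗[k] K ≃ₐ[B] R := .ofRingEquiv
    (f := (Algebra.TensorProduct.comm k B K).toRingEquiv.trans e.toRingEquiv) fun _ ↦ rfl
  refine ⟨B, inferInstance, inferInstance, inferInstance, .comp (ZMod p) k B,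
    .of_linearEquiv _ _ eB.symm.toLinearEquiv, fun t ht ↦ ?_⟩
  obtain ⟨q, hq⟩ : P.σ t ∈ Set.range (MvPolynomial.map (algebraMap k K)) := by
    rw [MvPolynomial.mem_range_map_iff_coeffs_subset]
    exact fun s hs ↦ hk (Or.inr (Set.mem_biUnion ht hs))
  refine ⟨Ideal.Quotient.mk _ q, (P.tensorModelOfHasCoeffsEquiv_tmul k 1 q).trans ?_⟩
  rw [map_one, one_mul, ← MvPolynomial.aeval_map_algebraMap K, hq, P.aeval_val_σ]

variable {A B : Type*} [CommRing A] [CommRing B]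

lemma map_comap_span_of_subset_range {f : A →+* B} {Y : Set B} (hY : Y ⊆ Set.range f) :
    ((Ideal.span Y).comap f).map f = Ideal.span Y := by
  refine le_antisymm Ideal.map_comap_le (Ideal.span_le.mpr fun y hy ↦ ?_)
  obtain ⟨a, rfl⟩ := hY hy
  exact Ideal.mem_map_of_mem f (Ideal.mem_comap.mpr (Ideal.subset_span hy))

lemma exists_map_eq_span_singleton_of_isPrincipal_map [IsLocalRing B] {f : A →+* B}
    {J : Ideal A} (hJ : (J.map f).IsPrincipal) : ∃ j ∈ J, J.map f = Ideal.span {f j} := by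
  obtain ⟨x, hx⟩ := hJ
  by_cases hle : J.map f ≤ maximalIdeal B • J.map f
  · have hbot : J.map f = ⊥ := Submodule.eq_bot_of_le_smul_of_le_jacobson_bot (maximalIdeal B) _
      ⟨{x}, by rw [Finset.coe_singleton, hx]⟩ hle (jacobson_eq_maximalIdeal ⊥ bot_ne_top).ge
    exact ⟨0, J.zero_mem, by simpa using hbot⟩
  rw [Ideal.map_le_iff_le_comap, SetLike.not_le_iff_exists] at hle
  obtain ⟨j, hj, hj'⟩ := hle
  obtain ⟨b, hb⟩ := Ideal.mem_span_singleton'.mp (hx ▸ Ideal.mem_map_of_mem f hj)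
  have hbu : IsUnit b := by
    by_contra h
    refine hj' ?_
    rw [Ideal.mem_comap, ← hb]
    exact Submodule.smul_mem_smul ((mem_maximalIdeal b).mpr h)
      (hx ▸ Ideal.mem_span_singleton_self x)
  exact ⟨j, hj, by rw [← hb, Ideal.span_singleton_mul_left_unit hbu, hx]⟩

variable (A B) in
lemma isPrincipalIdealRing_of_faithfullyFlat [Algebra A B] [Module.FaithfullyFlat A B]
    [IsLocalRing B] [IsPrincipalIdealRing B] : IsPrincipalIdealRing A := by
  refine ⟨fun J ↦ ?_⟩
  obtain ⟨j, -, hj⟩ := exists_map_eq_span_singleton_of_isPrincipal_map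
    (IsPrincipalIdealRing.principal (J.map (algebraMap A B)))
  refine ⟨j, ?_⟩
  rw [← Ideal.comap_map_eq_self_of_faithfullyFlat (B := B) J, hj, ← Set.image_singleton,
    ← Ideal.map_span, Ideal.comap_map_eq_self_of_faithfullyFlat]

lemma faithfullyFlat_localization_atPrime [Algebra A B] [Module.Flat A B] (Q : Ideal A)
    (P : Ideal B) [Q.IsPrime] [P.IsPrime] [P.LiesOver Q]
    [Algebra (Localization.AtPrime Q) (Localization.AtPrime P)]
    [Localization.AtPrime.IsLiesOverAlgebra Q P] :
    Module.FaithfullyFlat (Localization.AtPrime Q) (Localization.AtPrime P) := by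
  have : IsLocalHom (algebraMap (Localization.AtPrime Q) (Localization.AtPrime P)) := by
    rw [Localization.AtPrime.IsLiesOverAlgebra.algebraMap_eq]
    infer_instance
  exact Module.FaithfullyFlat.of_flat_of_isLocalHom

lemma not_tightMultiplier_le_of_finiteType (K : Type*) {R : Type*} [Field K] [CommRing R]
    [Algebra K R] [Algebra.FiniteType K R] {p : ℕ} [Fact p.Prime] [CharP R p] {P : Ideal R}
    [P.IsPrime] [IsDomain (Localization.AtPrime P)] [IsPrincipalIdealRing (Localization.AtPrime P)]
    {I : Ideal R} {z : R} (hz : z ∈ tightClosure p I) : ¬ tightMultiplier p I z ≤ P := by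
  have : Nontrivial R := CharP.nontrivial_of_char_ne_one (Fact.out : p.Prime).ne_one
  have : CharP K p := ((algebraMap K R).charP_iff (algebraMap K R).injective p).mpr inferInstance
  have : IsNoetherianRing R := Algebra.FiniteType.isNoetherianRing K R
  obtain ⟨c, hcz, hc⟩ := mem_tightClosure_iff.mp hz
  obtain ⟨Y, rfl : Ideal.span _ = I⟩ := IsNoetherian.noetherian I
  obtain ⟨B, _, _, _, _, _, hB⟩ :=
    exists_essFiniteType_faithfullyFlat K p (Y.finite_toSet.insert z |>.insert c)
  obtain ⟨⟨c, rfl⟩, ⟨z, rfl⟩, hY⟩ := by simpa only [Set.insert_subset_iff] using hB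
  let Q := P.under B
  let := Localization.AtPrime.algebraOfLiesOver Q P
  have := faithfullyFlat_localization_atPrime Q P
  have hinj : Function.Injective (algebraMap (Localization.AtPrime Q) (Localization.AtPrime P)) :=
    FaithfulSMul.algebraMap_injective _ _
  have : IsDomain (Localization.AtPrime Q) := hinj.isDomain _
  have := isPrincipalIdealRing_of_faithfullyFlat (Localization.AtPrime Q) (Localization.AtPrime P)
  have : Nontrivial B := (algebraMap B R).domain_nontrivial
  have : CharP B p := charP_of_injective_algebraMap (algebraMap (ZMod p) B).injective p
  have hcQ : algebraMap B (Localization.AtPrime Q) c ≠ 0 := fun h ↦ by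
    refine algebraMap_atPrime_ne_zero_of_mem_offMinimalPrimes hc P ?_
    rw [← IsScalarTower.algebraMap_apply,
      IsScalarTower.algebraMap_apply B (Localization.AtPrime Q), h, map_zero]
  rw [← map_comap_span_of_subset_range hY] at hcz ⊢
  rw [← Ideal.mem_comap, comap_tightMultiplier_map] at hcz
  exact fun hle ↦ not_tightMultiplier_le_of_essFiniteType hcz hcQ
    (Ideal.map_le_iff_le_comap.mp ((map_tightMultiplier_le _).trans hle))

end Descent

section Persistence

variable (K : Type*) {R : Type*} [Field K] [CommRing R] [Algebra K R] [Algebra.FiniteType K R]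
  {p : ℕ} [Fact p.Prime] [CharP R p] {I : Ideal R} {z : R}

include K in
lemma not_tightMultiplier_le_of_isFRational {P : Ideal R} [P.IsPrime] (hP : P.height ≤ 1)
    (hfr : IsFRational p (Localization.AtPrime P)) (hz : z ∈ tightClosure p I) :
    ¬ tightMultiplier p I z ≤ P := by
  have : IsNoetherianRing R := Algebra.FiniteType.isNoetherianRing K R
  have hp : 1 < p := (Fact.out : p.Prime).one_lt
  by_cases hmin : P ∈ minimalPrimes R
  · exact mem_tightClosure_iff_forall_minimalPrimes.mp hz P hmin
  have hht : (maximalIdeal (Localization.AtPrime P)).height = 1 := by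
    rw [← WithBot.coe_inj, maximalIdeal_height_eq_ringKrullDim,
      IsLocalization.AtPrime.ringKrullDim_eq_height P, WithBot.coe_inj]
    exact hP.antisymm (Order.one_le_iff_ne_zero.mpr (mt Ideal.height_eq_zero_iff.mp hmin))
  obtain ⟨t, ht⟩ := hfr.exists_maximalIdeal_eq_span_singleton hp hht
  have := isDomain_of_maximalIdeal_eq_span_singleton ht fun h ↦
    one_ne_zero (hht.symm.trans (Ideal.height_eq_zero_iff.mpr h))
  have := isPrincipalIdealRing_of_maximalIdeal_eq_span_singleton ht
  exact not_tightMultiplier_le_of_finiteType K hz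

include K in
lemma mk_mem_tightClosure_map {𝔪 : Ideal R} (hiso : IsIsolatedNonFRational p 𝔪) (hI : I ≤ 𝔪)
    (a : R) (hz : z ∈ tightClosure p I) :
    Ideal.Quotient.mk (Ideal.span {a}) z ∈
      tightClosure p (I.map (Ideal.Quotient.mk (Ideal.span {a}))) := by
  have : IsNoetherianRing R := Algebra.FiniteType.isNoetherianRing K R
  have hp : 1 < p := (Fact.out : p.Prime).one_lt
  refine mem_tightClosure_iff_forall_minimalPrimes.mpr fun P' hP' ↦ ?_
  have := hP'.isPrime
  obtain ⟨P, hPdef⟩ : ∃ P, P = P'.comap (Ideal.Quotient.mk (Ideal.span {a})) := ⟨_, rfl⟩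
  have hPprime : P.IsPrime := hPdef ▸ inferInstance
  have hPmin : P ∈ (Ideal.span {a}).minimalPrimes := by
    rw [Ideal.minimalPrimes_eq_comap]
    exact ⟨P', hP', hPdef.symm⟩
  by_cases hP𝔪 : P = 𝔪
  · refine not_tightMultiplier_le_of_mem_minimalPrimes hp hP' ?_
    rw [← Ideal.mem_comap, ← hPdef]
    exact tightClosure_subset_of_isPrime hp (hP𝔪 ▸ hI) hz
  refine fun hle ↦ not_tightMultiplier_le_of_isFRational K
    (Ideal.height_le_one_of_isPrincipal_of_mem_minimalPrimes _ P hPmin)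
    (hiso ⟨P, hPprime⟩ hP𝔪) hz ?_
  rw [hPdef]
  exact Ideal.map_le_iff_le_comap.mp ((map_tightMultiplier_le _).trans hle)

end Persistence

section LimitClosure

variable {R : Type*} [CommRing R] {n : ℕ} {x : Fin (n + 1) → R}

lemma map_mk_span_range (x : Fin (n + 1) → R) :
    (Ideal.span (Set.range x)).map (Ideal.Quotient.mk (Ideal.span {x (Fin.last n)})) =
      Ideal.span (Set.range fun j : Fin n ↦
        Ideal.Quotient.mk (Ideal.span {x (Fin.last n)}) (x j.castSucc)) := by
  rw [Ideal.map_span, ← Set.range_comp]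
  refine le_antisymm (Ideal.span_le.mpr ?_) (Ideal.span_mono ?_)
  · rintro _ ⟨j, rfl⟩
    induction j using Fin.lastCases with
    | last => simp
    | cast j => exact Ideal.subset_span ⟨j, rfl⟩
  · rintro _ ⟨j, rfl⟩
    exact ⟨j.castSucc, rfl⟩

lemma mem_limitClosure_of_mk_mem {r : R}
    (hr : Ideal.Quotient.mk (Ideal.span {x (Fin.last n)}) r ∈ limitClosure fun j : Fin n ↦
      Ideal.Quotient.mk (Ideal.span {x (Fin.last n)}) (x j.castSucc)) : r ∈ limitClosure x := by
  obtain ⟨s, hs, h⟩ := hr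
  refine ⟨s, hs, ?_⟩
  set J : Ideal R := Ideal.span (Set.range fun j ↦ x j ^ s)
  have hcast (j : Fin n) : x j.castSucc ^ s ∈ J := Ideal.subset_span ⟨j.castSucc, rfl⟩
  have hlast : x (Fin.last n) ^ (s - 1) * x (Fin.last n) ∈ J := by
    rw [pow_sub_one_mul (by omega)]
    exact Ideal.subset_span ⟨Fin.last n, rfl⟩
  have hmem : (∏ j : Fin n, x j.castSucc) ^ (s - 1) * r ∈
      Ideal.span (Set.range fun j : Fin n ↦ x j.castSucc ^ s) ⊔ Ideal.span {x (Fin.last n)} := by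
    rw [← Ideal.mem_quotient_iff_mem_sup, Ideal.map_span, ← Set.range_comp]
    simpa [Function.comp_def] using h
  obtain ⟨y, hy, w, hw, hyw⟩ := Submodule.mem_sup.mp hmem
  obtain ⟨t, rfl⟩ := Ideal.mem_span_singleton'.mp hw
  rw [Fin.prod_univ_castSucc, mul_pow, mul_right_comm, ← hyw, add_mul, mul_assoc, mul_comm (x _)]
  refine J.add_mem (J.mul_mem_right _ (Ideal.span_le.mpr ?_ hy)) (J.mul_mem_left t hlast)
  rintro _ ⟨j, rfl⟩
  exact hcast j

end LimitClosure

theorem stmt16_general {K R : Type*} [Field K] [CommRing R] [Algebra K R] [Algebra.FiniteType K R]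
    (p : ℕ) [Fact p.Prime] [CharP R p] (𝒜 : ℕ → Submodule K R) (𝔪 : Ideal R)
    (hiso : IsIsolatedNonFRational p 𝔪) (n : ℕ) (x : Fin (n + 1) → R)
    (hx : Ideal.span (Set.range x) ≤ 𝔪) :
    (∀ r ∈ tightClosure p (Ideal.span (Set.range x)),
      Ideal.Quotient.mk (Ideal.span {x (Fin.last n)}) r ∈
        tightClosure p (Ideal.span (Set.range fun j : Fin n =>
          Ideal.Quotient.mk (Ideal.span {x (Fin.last n)}) (x j.castSucc)))) ∧
    (∀ r ∈ tightClosure p (Ideal.span (Set.range x)),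
      Ideal.Quotient.mk (Ideal.span {x (Fin.last n)}) r ∈
        limitClosure (fun j : Fin n =>
          Ideal.Quotient.mk (Ideal.span {x (Fin.last n)}) (x j.castSucc)) →
      r ∈ limitClosure x) ∧
    (∀ m : ℤ,
      (∃ z : R, z ∈ gradeZ 𝒜 m ∧ z ∈ tightClosure p (Ideal.span (Set.range x)) ∧
        z ∉ limitClosure x) →
      ∃ w : R, w ∈ gradeZ 𝒜 m ∧
        Ideal.Quotient.mk (Ideal.span {x (Fin.last n)}) w ∈
          tightClosure p (Ideal.span (Set.range fun j : Fin n =>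
            Ideal.Quotient.mk (Ideal.span {x (Fin.last n)}) (x j.castSucc))) ∧
        Ideal.Quotient.mk (Ideal.span {x (Fin.last n)}) w ∉
          limitClosure (fun j : Fin n =>
            Ideal.Quotient.mk (Ideal.span {x (Fin.last n)}) (x j.castSucc))) := by
  have hpersist : ∀ r ∈ tightClosure p (Ideal.span (Set.range x)), _ := fun r hr ↦
    map_mk_span_range x ▸ mk_mem_tightClosure_map K hiso hx (x (Fin.last n)) hr
  exact ⟨hpersist, fun _ _ ↦ mem_limitClosure_of_mk_mem, fun m ⟨z, hzm, hz, hzlim⟩ ↦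
    ⟨z, hzm, hpersist z hz, mt mem_limitClosure_of_mk_mem hzlim⟩⟩

/-- let `(R,𝔪)` be an ℕ-graded isolated non-`F`-rational singularity of
dimension `d` (`= n+1` below), `x_1,…,x_d` a homogeneous sop, and `φ : R → R̄ = R/x_dR` the
natural surjection.  Then `φ` maps `(x_1,…,x_d)^*` into `(x̄_1,…,x̄_{d-1})^*` (so it induces
`φ̄ : (x_1,…,x_d)^* → (x̄_1,…,x̄_{d-1})^*/(x̄_1,…,x̄_{d-1})^lim`), the kernel of `φ̄` is
contained in `(x_1,…,x_d)^lim`, and hence for every `n ∈ ℤ`, if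
`[(x_1,…,x_d)^*/(x_1,…,x_d)^lim]_n ≠ 0` then `[(x̄_1,…,x̄_{d-1})^*/(x̄_1,…,x̄_{d-1})^lim]_n ≠ 0`. -/
theorem stmt16 {K : Type} [Field K] {R : Type} [CommRing R] [Algebra K R]
    [Algebra.FiniteType K R] [IsReduced R]
    (p : ℕ) [Fact p.Prime] [CharP R p]
    (𝒜 : ℕ → Submodule K R) [GradedAlgebra 𝒜]
    (𝔪 : Ideal R) (h𝔪 : 𝔪 = (HomogeneousIdeal.irrelevant 𝒜).toIdeal)
    (n : ℕ) (hdim : ringKrullDim R = (n + 1 : ℕ))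
    (hequi : ∀ P ∈ minimalPrimes R, ringKrullDim (R ⧸ P) = ringKrullDim R)
    (hiso : IsIsolatedNonFRational p 𝔪)
    (x : Fin (n + 1) → R) (degs : Fin (n + 1) → ℕ) (hhom : ∀ j, x j ∈ 𝒜 (degs j))
    (hsop : (Ideal.span (Set.range x)).radical = 𝔪) :
    (∀ r ∈ tightClosure p (Ideal.span (Set.range x)),
      Ideal.Quotient.mk (Ideal.span {x (Fin.last n)}) r ∈
        tightClosure p (Ideal.span (Set.range fun j : Fin n =>
          Ideal.Quotient.mk (Ideal.span {x (Fin.last n)}) (x j.castSucc)))) ∧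
    (∀ r ∈ tightClosure p (Ideal.span (Set.range x)),
      Ideal.Quotient.mk (Ideal.span {x (Fin.last n)}) r ∈
        limitClosure (fun j : Fin n =>
          Ideal.Quotient.mk (Ideal.span {x (Fin.last n)}) (x j.castSucc)) →
      r ∈ limitClosure x) ∧
    (∀ m : ℤ,
      (∃ z : R, z ∈ gradeZ 𝒜 m ∧ z ∈ tightClosure p (Ideal.span (Set.range x)) ∧
        z ∉ limitClosure x) →
      ∃ w : R, w ∈ gradeZ 𝒜 m ∧
        Ideal.Quotient.mk (Ideal.span {x (Fin.last n)}) w ∈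
          tightClosure p (Ideal.span (Set.range fun j : Fin n =>
            Ideal.Quotient.mk (Ideal.span {x (Fin.last n)}) (x j.castSucc))) ∧
        Ideal.Quotient.mk (Ideal.span {x (Fin.last n)}) w ∉
          limitClosure (fun j : Fin n =>
            Ideal.Quotient.mk (Ideal.span {x (Fin.last n)}) (x j.castSucc))) :=
  stmt16_general p 𝒜 𝔪 hiso n x (hsop ▸ Ideal.le_radical)
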